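/- Let β > 2 and consider the potential with external field of angle θ_e = π and magnitude r, F_β(x,r) = F_β(x) + r·x_0 − (r/2)(x_1+x_2). (i) If 0 < r < 1 and t ∈ (0,m_0(r)) satisfies f_r(t) = β, where m_0(r) is the unique point of (0,1/2) with h(m_0(r)) = r, then (t,t) is a local minimum of F_β(·,r). (ii) If r > 0 and t ∈ (1/3,1/2) satisfies f_r(t) = β, then (t,t) is a critical point of F_β(·,r) at which the Hessian of F_β(·,r) has strictly negative determinant, i.e. (t,t) is a saddle point. -/

import Mathlib

/-!
With `x₀ = 1 - x₁ - x₂` the quadratic part is `|ψ|² = a² + b² - ab`, `a = x₁ - x₀`, `b = x₂ - x₀`, so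

* `∂₁F = -(3/2) a + (log (3x₁) - log (3x₀)) / β - 3r/2`, and symmetrically for `∂₂F`;
* at `(t,t)` both vanish exactly when `f_r(t) = β`;
* at `(t,t)` the Hessian has eigenvalues `1/(β t(1-2t)) - 9/2` along `(1,1)` and
  `1/(βt) - 3/2` along `(1,-1)`.

Inserting `f_r(t) = β`, the first eigenvalue is positive iff `log((1-2t)/t)` and `h(t) - r` have the
same sign. Since `h'(t) = -3(1-4t) log((1-2t)/t)`, `h` decreases on `(0,1/4]`, increases on
`[1/4,1/3]` and decreases on `[1/3,1/2)`, with `h(1/3) = 0`. Hence `h ≤ 0` on `[1/4,1/2)`.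

If `t > 1/3`, then `h(t) ≤ 0 < r`, so the first eigenvalue is positive, while `βt > 2/3` makes the
second one negative: the determinant is negative. For `t < m₀`, `h(m₀) = r > 0` forces `m₀ < 1/4`, so
`h(t) > r` and the first eigenvalue is positive; as `t < 1/3`, so is the second. The local minimum is
then obtained by bounding each entropy term `x log(3x)` from below near its base point by a quadratic
with slightly reduced curvature (`entropy_lower`), the remaining terms being exactly quadratic.
-/

/-- The spin value `v_k = (cos(2πk/3), sin(2πk/3))`. -/
noncomputable def potV (k : ℕ) : ℝ × ℝ :=
  (Real.cos (2 * Real.pi * k / 3), Real.sin (2 * Real.pi * k / 3))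

/-- `ψ(x) = (2x₁+x₂−1)v₁ + (x₁+2x₂−1)v₂`. -/
noncomputable def potPsi (x : ℝ × ℝ) : ℝ × ℝ :=
  ((2 * x.1 + x.2 - 1) * (potV 1).1 + (x.1 + 2 * x.2 - 1) * (potV 2).1,
   (2 * x.1 + x.2 - 1) * (potV 1).2 + (x.1 + 2 * x.2 - 1) * (potV 2).2)

/-- The entropy `S(x) = Σᵢ xᵢ log(3xᵢ)` with `x₀ = 1 − x₁ − x₂`
(the convention `t log t = 0` at `t = 0` holds since `Real.log 0 = 0`). -/
noncomputable def potS (x : ℝ × ℝ) : ℝ :=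
  (1 - x.1 - x.2) * Real.log (3 * (1 - x.1 - x.2))
    + x.1 * Real.log (3 * x.1) + x.2 * Real.log (3 * x.2)

/-- The mean-field Potts potential `F_β(x) = −(1/2)|ψ(x)|² + (1/β)S(x)`. -/
noncomputable def potF (β : ℝ) (x : ℝ × ℝ) : ℝ :=
  - (1 / 2) * ((potPsi x).1 ^ 2 + (potPsi x).2 ^ 2) + (1 / β) * potS x

/-- The open two-dimensional simplex `Ξ°`. -/
def simplexInt : Set (ℝ × ℝ) := {x | 0 < x.1 ∧ 0 < x.2 ∧ x.1 + x.2 < 1}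

/-- The canonical basis of `ℝ × ℝ`. -/
noncomputable def eBasis : Fin 2 → ℝ × ℝ := ![(1, 0), (0, 1)]

/-- The Hessian matrix of a function `f : ℝ × ℝ → ℝ` at a point `x`. -/
noncomputable def hessian (f : ℝ × ℝ → ℝ) (x : ℝ × ℝ) : Matrix (Fin 2) (Fin 2) ℝ :=
  Matrix.of fun i j => fderiv ℝ (fun y => fderiv ℝ f y (eBasis j)) x (eBasis i)

/-- `h(t) = −3t(1−2t) log((1−2t)/t) − 3t + 1`. -/
noncomputable def hfun (t : ℝ) : ℝ :=
  -3 * t * (1 - 2 * t) * Real.log ((1 - 2 * t) / t) - 3 * t + 1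

/-- `f_r(t) = (2/(3(1−r−3t))) log((1−2t)/t)`. -/
noncomputable def frfun (r t : ℝ) : ℝ :=
  2 / (3 * (1 - r - 3 * t)) * Real.log ((1 - 2 * t) / t)

/-- The potential with external field of angle `θ_e = π` and magnitude `r`:
`F_β(x,r) = F_β(x) + r x₀ − (r/2)(x₁ + x₂)`. -/
noncomputable def potFpi (β r : ℝ) (x : ℝ × ℝ) : ℝ :=
  potF β x + r * (1 - x.1 - x.2) - (r / 2) * (x.1 + x.2)

/-! ### The potential in coordinates -/

lemma potFpi_eq (β r : ℝ) (x : ℝ × ℝ) :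
    potFpi β r x = -(1 / 2) * ((2 * x.1 + x.2 - 1) ^ 2 + (x.1 + 2 * x.2 - 1) ^ 2
        - (2 * x.1 + x.2 - 1) * (x.1 + 2 * x.2 - 1))
      + (1 / β) * potS x + r * (1 - x.1 - x.2) - (r / 2) * (x.1 + x.2) := by
  have c1 : Real.cos (2 * Real.pi * (1 : ℕ) / 3) = -(1 / 2) := by
    rw [show 2 * Real.pi * (1 : ℕ) / 3 = Real.pi - Real.pi / 3 by push_cast; ring,
      Real.cos_pi_sub, Real.cos_pi_div_three]
  have s1 : Real.sin (2 * Real.pi * (1 : ℕ) / 3) = √3 / 2 := by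
    rw [show 2 * Real.pi * (1 : ℕ) / 3 = Real.pi - Real.pi / 3 by push_cast; ring,
      Real.sin_pi_sub, Real.sin_pi_div_three]
  have c2 : Real.cos (2 * Real.pi * (2 : ℕ) / 3) = -(1 / 2) := by
    rw [show 2 * Real.pi * (2 : ℕ) / 3 = Real.pi / 3 + Real.pi by push_cast; ring,
      Real.cos_add_pi, Real.cos_pi_div_three]
  have s2 : Real.sin (2 * Real.pi * (2 : ℕ) / 3) = -(√3 / 2) := by
    rw [show 2 * Real.pi * (2 : ℕ) / 3 = Real.pi / 3 + Real.pi by push_cast; ring,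
      Real.sin_add_pi, Real.sin_pi_div_three]
  have h3 : √3 ^ 2 = 3 := Real.sq_sqrt (by norm_num)
  simp only [potFpi, potF, potPsi, potV, c1, s1, c2, s2]
  linear_combination (-(1 / 8) * (x.1 - x.2) ^ 2) * h3

/-! ### The function `h` -/

lemma hasDerivAt_hfun {t : ℝ} (h0 : 0 < t) (h1 : t < 1 / 2) :
    HasDerivAt hfun (-3 * (1 - 4 * t) * Real.log ((1 - 2 * t) / t)) t := by
  have hu : 0 < 1 - 2 * t := by linarith
  have hlin : HasDerivAt (fun s : ℝ => 1 - 2 * s) (-2) t := by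
    simpa using ((hasDerivAt_id t).const_mul 2).const_sub 1
  have hid : HasDerivAt (fun s : ℝ => s) 1 t := hasDerivAt_id t
  have hlog := (hlin.div hid h0.ne').log (by positivity : (1 - 2 * t) / t ≠ 0)
  have H := ((((hid.const_mul (-3)).mul hlin).mul hlog).sub (hid.const_mul 3)).add_const 1
  refine H.congr_deriv ?_
  simp only [Pi.div_apply, Pi.mul_apply]
  field_simp
  ring

lemma continuousOn_hfun {a b : ℝ} (ha : 0 < a) (hb : b < 1 / 2) :
    ContinuousOn hfun (Set.Icc a b) := fun _ hx =>
  (hasDerivAt_hfun (ha.trans_le hx.1) (hx.2.trans_lt hb)).continuousAt.continuousWithinAt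

lemma log_ratio_nonneg {t : ℝ} (h0 : 0 < t) (h1 : t ≤ 1 / 3) :
    0 ≤ Real.log ((1 - 2 * t) / t) :=
  Real.log_nonneg (by rw [le_div_iff₀ h0]; linarith)

lemma log_ratio_pos {t : ℝ} (h0 : 0 < t) (h1 : t < 1 / 3) :
    0 < Real.log ((1 - 2 * t) / t) :=
  Real.log_pos (by rw [lt_div_iff₀ h0]; linarith)

lemma log_ratio_neg {t : ℝ} (h0 : 1 / 3 < t) (h1 : t < 1 / 2) :
    Real.log ((1 - 2 * t) / t) < 0 :=
  Real.log_neg (div_pos (by linarith) (by linarith)) (by rw [div_lt_one (by linarith)]; linarith)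

lemma hfun_third : hfun (1 / 3) = 0 := by
  norm_num [hfun]

/-- `1/3` maximises `h` on `[1/4, 1/2)`. -/
lemma hfun_nonpos {t : ℝ} (h0 : 1 / 4 ≤ t) (h1 : t < 1 / 2) : hfun t ≤ 0 := by
  rw [← hfun_third]
  rcases le_total t (1 / 3) with h | h
  · have : MonotoneOn hfun (Set.Icc t (1 / 3)) := by
      refine monotoneOn_of_hasDerivWithinAt_nonneg (convex_Icc _ _)
        (continuousOn_hfun (by linarith) (by norm_num))
        (f' := fun s => -3 * (1 - 4 * s) * Real.log ((1 - 2 * s) / s)) ?_ ?_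
      all_goals
        intro s hs
        rw [interior_Icc] at hs
        obtain ⟨hs1, hs2⟩ := hs
      · exact (hasDerivAt_hfun (by linarith) (by linarith)).hasDerivWithinAt
      · exact mul_nonneg (by linarith) (log_ratio_nonneg (by linarith) hs2.le)
    exact this ⟨le_rfl, h⟩ ⟨h, le_rfl⟩ h
  · have : AntitoneOn hfun (Set.Icc (1 / 3) t) := by
      refine antitoneOn_of_hasDerivWithinAt_nonpos (convex_Icc _ _)
        (continuousOn_hfun (by norm_num) h1)
        (f' := fun s => -3 * (1 - 4 * s) * Real.log ((1 - 2 * s) / s)) ?_ ?_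
      all_goals
        intro s hs
        rw [interior_Icc] at hs
        obtain ⟨hs1, hs2⟩ := hs
      · exact (hasDerivAt_hfun (by linarith) (by linarith)).hasDerivWithinAt
      · exact mul_nonpos_of_nonneg_of_nonpos (by linarith)
          (log_ratio_neg hs1 (by linarith)).le
    exact this ⟨le_rfl, h⟩ ⟨h, le_rfl⟩ h

lemma hfun_lt_of_lt {s t : ℝ} (h0 : 0 < s) (hst : s < t) (ht : t ≤ 1 / 4) :
    hfun t < hfun s := by
  have : StrictAntiOn hfun (Set.Icc s t) := by
    refine strictAntiOn_of_hasDerivWithinAt_neg (convex_Icc _ _)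
      (continuousOn_hfun h0 (by linarith))
      (f' := fun s => -3 * (1 - 4 * s) * Real.log ((1 - 2 * s) / s)) ?_ ?_
    all_goals
      intro u hu
      rw [interior_Icc] at hu
      obtain ⟨hu1, hu2⟩ := hu
    · exact (hasDerivAt_hfun (by linarith) (by linarith)).hasDerivWithinAt
    · exact mul_neg_of_neg_of_pos (by linarith) (log_ratio_pos (by linarith) (by linarith))
  exact this ⟨le_rfl, hst.le⟩ ⟨hst.le, le_rfl⟩ hst

/-- The critical-point equation on the diagonal, cleared of denominators. -/
lemma critical_eq {β r t : ℝ} (hβ : 2 < β) (h : frfun r t = β) :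
    1 - r - 3 * t ≠ 0 ∧
      Real.log ((1 - 2 * t) / t) = 3 / 2 * β * (1 - r - 3 * t) := by
  have hne : 1 - r - 3 * t ≠ 0 := by
    intro h0
    rw [frfun, h0] at h
    norm_num at h
    linarith
  refine ⟨hne, ?_⟩
  rw [← h, frfun]
  generalize 1 - r - 3 * t = d at hne
  field_simp

/-- Partial fractions relating the `(1,1)` eigenvalue to the matrix entries of the Hessian. -/
lemma div_split {t k : ℝ} (ht : t ≠ 0) (hu : 1 - 2 * t ≠ 0) :
    k / (t * (1 - 2 * t)) = k / t + 2 * (k / (1 - 2 * t)) := by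
  obtain ⟨u, hu'⟩ : ∃ u, u = 1 - 2 * t := ⟨_, rfl⟩
  rw [← hu'] at hu ⊢
  field_simp
  rw [hu']
  ring

/-! ### Local minimum -/

/-- Second-order lower bound for `x log (3x)` near `t`, with curvature reduced from `1/t` to
`k/t`. -/
lemma entropy_lower {t k : ℝ} (ht : 0 < t) (hk : k < 1) :
    ∀ᶠ x in nhds t, t * Real.log (3 * t) + (Real.log (3 * t) + 1) * (x - t)
      + k / (2 * t) * (x - t) ^ 2 ≤ x * Real.log (3 * x) := by
  set g : ℝ → ℝ := fun x =>
    x * Real.log (3 * x) - (Real.log (3 * t) + 1) * (x - t) - k / (2 * t) * (x - t) ^ 2 with hg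
  have hd : ∀ x : ℝ, 0 < x →
      HasDerivAt g (Real.log (3 * x) - Real.log (3 * t) - k / t * (x - t)) x := by
    intro x hx
    have hid : HasDerivAt (fun s : ℝ => s) 1 x := hasDerivAt_id x
    have h1 := hid.mul ((hid.const_mul 3).log (by positivity : 3 * x ≠ 0))
    have h2 := (hid.sub_const t).const_mul (Real.log (3 * t) + 1)
    have h3 := ((hid.sub_const t).pow 2).const_mul (k / (2 * t))
    refine ((h1.sub h2).sub h3).congr_deriv ?_
    simp
    field_simp
    ring
  have hev : deriv g =ᶠ[nhds t]
      fun x => Real.log (3 * x) - Real.log (3 * t) - k / t * (x - t) := by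
    filter_upwards [lt_mem_nhds ht] with x hx using (hd x hx).deriv
  have hdd : HasDerivAt (fun x => Real.log (3 * x) - Real.log (3 * t) - k / t * (x - t))
      ((1 - k) / t) t := by
    have hid : HasDerivAt (fun s : ℝ => s) 1 t := hasDerivAt_id t
    have h1 := ((hid.const_mul 3).log (by positivity : 3 * t ≠ 0)).sub_const (Real.log (3 * t))
    refine (h1.sub ((hid.sub_const t).const_mul (k / t))).congr_deriv ?_
    field_simp
  have hmin : IsLocalMin g t := by
    apply isLocalMin_of_deriv_deriv_pos
    · rw [hev.deriv_eq, hdd.deriv]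
      exact div_pos (by linarith) ht
    · rw [(hd t ht).deriv]; ring
    · exact (hd t ht).continuousAt
  filter_upwards [hmin] with x hx
  simp only [hg] at hx
  linarith

lemma isLocalMin_diag {β r t : ℝ} (hβ : 2 < β) (h0 : 0 < t) (h1 : t < 1 / 3)
    (hcrit : Real.log ((1 - 2 * t) / t) = 3 / 2 * β * (1 - r - 3 * t))
    (hpos : 9 / 2 * β * (t * (1 - 2 * t)) < 1) : IsLocalMin (potFpi β r) (t, t) := by
  obtain ⟨k, hk1, hk2⟩ := exists_between hpos
  have hβ0 : 0 < β := by linarith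
  have hu : 0 < 1 - 2 * t := by linarith
  have e1 := (continuous_fst (X := ℝ) (Y := ℝ)).continuousAt (x := (t, t)) |>.eventually
    (entropy_lower h0 hk2)
  have e2 := (continuous_snd (X := ℝ) (Y := ℝ)).continuousAt (x := (t, t)) |>.eventually
    (entropy_lower h0 hk2)
  have c3 : Filter.Tendsto (fun x : ℝ × ℝ => 1 - x.1 - x.2) (nhds (t, t))
      (nhds (1 - 2 * t)) := by
    have : Continuous (fun x : ℝ × ℝ => 1 - x.1 - x.2) := by fun_prop
    convert this.tendsto (t, t) using 2
    ring
  have e3 := c3.eventually (entropy_lower hu hk2)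
  rw [Real.log_div hu.ne' h0.ne'] at hcrit
  have hl1 : Real.log (3 * t) = Real.log 3 + Real.log t :=
    Real.log_mul (by norm_num) h0.ne'
  have hl2 : Real.log (3 * (1 - 2 * t)) = Real.log 3 + Real.log (1 - 2 * t) :=
    Real.log_mul (by norm_num) hu.ne'
  filter_upwards [e1, e2, e3] with ⟨x, y⟩ i1 i2 i3
  simp only at i1 i2 i3
  rw [potFpi_eq, potFpi_eq]
  simp only [potS]
  rw [show 1 - t - t = 1 - 2 * t by ring]
  -- `hA` and `hB` are the Hessian eigenvalues with `1/β` replaced by `k/β`; the directions are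
  -- `x + y - 2t` and `x - y`
  have hA : 0 ≤ k / (t * (1 - 2 * t)) / β - 9 / 2 := by
    rw [sub_nonneg, div_div, le_div_iff₀ (by positivity)]
    linarith
  have hB : 0 ≤ k / t / β - 3 / 2 := by
    rw [sub_nonneg, div_div, le_div_iff₀ (by positivity)]
    nlinarith [mul_pos hβ0 h0, mul_pos (mul_pos hβ0 h0) (sub_pos.2 h1)]
  have hq := add_nonneg (mul_nonneg hA (sq_nonneg (x + y - 2 * t)))
    (mul_nonneg hB (sq_nonneg (x - y)))
  have hS := mul_le_mul_of_nonneg_left (add_le_add (add_le_add i3 i1) i2)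
    (by positivity : 0 ≤ 1 / β)
  have hL : 1 / β * (Real.log (3 * (1 - 2 * t)) - Real.log (3 * t)) = 3 / 2 * (1 - r - 3 * t) := by
    rw [hl1, hl2, show Real.log 3 + Real.log (1 - 2 * t) - (Real.log 3 + Real.log t)
      = Real.log (1 - 2 * t) - Real.log t by ring, hcrit]
    field_simp
  have hK : k / (t * (1 - 2 * t)) = k / t + 2 * (k / (1 - 2 * t)) := by
    exact div_split h0.ne' hu.ne'
  have hK1 : k / (2 * t) = k / t / 2 := by field_simp
  have hK2 : k / (2 * (1 - 2 * t)) = k / (1 - 2 * t) / 2 := by field_simp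
  rw [hK] at hq
  rw [hK1, hK2] at hS
  have key : (x + y - 2 * t) * (1 / β * (Real.log (3 * (1 - 2 * t)) - Real.log (3 * t)))
     = (x + y - 2 * t) * (3 / 2 * (1 - r - 3 * t)) := by rw [hL]
  simp only [div_eq_mul_inv] at *
  nlinarith [hS, hq, key]

/-! ### Derivatives on the open simplex -/

lemma isOpen_simplexInt : IsOpen simplexInt := by
  have h1 : IsOpen {x : ℝ × ℝ | 0 < x.1} := isOpen_lt continuous_const continuous_fst
  have h2 : IsOpen {x : ℝ × ℝ | 0 < x.2} := isOpen_lt continuous_const continuous_snd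
  have h3 : IsOpen {x : ℝ × ℝ | x.1 + x.2 < 1} :=
    isOpen_lt (by fun_prop) continuous_const
  exact h1.inter (h2.inter h3)

/-- The partial derivative of the potential with respect to the coordinate whose value is `p`, the
other coordinate having value `q`: `partialF β r x₁ x₂` is `∂₁F` and `partialF β r x₂ x₁` is `∂₂F`. -/
noncomputable def partialF (β r p q : ℝ) : ℝ :=
  -(3 / 2) * (2 * p + q - 1) + (1 / β) * (Real.log (3 * p) - Real.log (3 * (1 - p - q)))
    - 3 / 2 * r

open ContinuousLinearMap in
lemma hasFDerivAt_potFpi (β r : ℝ) {x : ℝ × ℝ} (hx : x ∈ simplexInt) :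
    HasFDerivAt (potFpi β r) (partialF β r x.1 x.2 • fst ℝ ℝ ℝ
      + partialF β r x.2 x.1 • snd ℝ ℝ ℝ) x := by
  obtain ⟨h1, h2, h3⟩ := hx
  have h3' : 0 < 1 - x.1 - x.2 := by linarith
  have h4 : 0 < 1 - x.2 - x.1 := by linarith
  rw [show potFpi β r = _ from funext (potFpi_eq β r)]
  have d1 : HasFDerivAt (fun y : ℝ × ℝ => y.1) (fst ℝ ℝ ℝ) x := hasFDerivAt_fst
  have d2 : HasFDerivAt (fun y : ℝ × ℝ => y.2) (snd ℝ ℝ ℝ) x := hasFDerivAt_snd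
  have d0 := (d1.const_sub 1).sub d2
  have da := ((d1.const_mul 2).add d2).sub_const 1
  have db := (d1.add (d2.const_mul 2)).sub_const 1
  have l0 := d0.mul ((d0.const_mul 3).log (by simp; positivity))
  have l1 := d1.mul ((d1.const_mul 3).log (by positivity))
  have l2 := d2.mul ((d2.const_mul 3).log (by positivity))
  have H := ((((((da.pow 2).add (db.pow 2)).sub (da.mul db)).const_mul (-(1 / 2))).add
    (((l0.add l1).add l2).const_mul (1 / β))).add (d0.const_mul r)).sub
    ((d1.add d2).const_mul (r / 2))
  refine H.congr_fderiv ?_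
  ext
  · simp [partialF]
    field_simp
    ring
  · simp [partialF]
    rw [show 1 - x.2 - x.1 = 1 - x.1 - x.2 by ring]
    field_simp
    ring

open ContinuousLinearMap in
lemma hasFDerivAt_partialF (β r : ℝ) {x : ℝ × ℝ} (hx : x ∈ simplexInt) :
    HasFDerivAt (fun y : ℝ × ℝ => partialF β r y.1 y.2)
      ((-3 + 1 / β * (1 / x.1 + 1 / (1 - x.1 - x.2))) • fst ℝ ℝ ℝ
      + (-(3 / 2) + 1 / β * (1 / (1 - x.1 - x.2))) • snd ℝ ℝ ℝ) x := by
  obtain ⟨h1, h2, h3⟩ := hx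
  have h3' : 0 < 1 - x.1 - x.2 := by linarith
  have d1 : HasFDerivAt (fun y : ℝ × ℝ => y.1) (fst ℝ ℝ ℝ) x := hasFDerivAt_fst
  have d2 : HasFDerivAt (fun y : ℝ × ℝ => y.2) (snd ℝ ℝ ℝ) x := hasFDerivAt_snd
  have d0 := (d1.const_sub 1).sub d2
  have da := ((d1.const_mul 2).add d2).sub_const 1
  have l0 := (d0.const_mul 3).log (by simp; positivity)
  have l1 := (d1.const_mul 3).log (by positivity)
  have H := ((da.const_mul (-(3 / 2))).add ((l1.sub l0).const_mul (1 / β))).sub_const (3 / 2 * r)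
  refine H.congr_fderiv ?_
  ext
  · simp
    field_simp
  · simp

open ContinuousLinearMap in
lemma hasFDerivAt_partialF_swap (β r : ℝ) {x : ℝ × ℝ} (hx : x ∈ simplexInt) :
    HasFDerivAt (fun y : ℝ × ℝ => partialF β r y.2 y.1)
      ((-(3 / 2) + 1 / β * (1 / (1 - x.1 - x.2))) • fst ℝ ℝ ℝ
      + (-3 + 1 / β * (1 / x.2 + 1 / (1 - x.1 - x.2))) • snd ℝ ℝ ℝ) x := by
  have hx' : x.swap ∈ simplexInt := ⟨hx.2.1, hx.1, by simpa [add_comm] using hx.2.2⟩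
  have hs : HasFDerivAt (fun y : ℝ × ℝ => y.swap) ((snd ℝ ℝ ℝ).prod (fst ℝ ℝ ℝ)) x :=
    hasFDerivAt_snd.prodMk hasFDerivAt_fst
  refine ((hasFDerivAt_partialF β r hx').comp x hs).congr_fderiv ?_
  have e : 1 - x.2 - x.1 = 1 - x.1 - x.2 := by ring
  ext <;> simp [e]

lemma hessian_det (β r : ℝ) {t : ℝ} (h0 : 0 < t) (h1 : t < 1 / 2) :
    (hessian (potFpi β r) (t, t)).det =
      (1 / β * (1 / (t * (1 - 2 * t))) - 9 / 2) * (1 / β * (1 / t) - 3 / 2) := by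
  have hu : 0 < 1 - 2 * t := by linarith
  have hx : ((t, t) : ℝ × ℝ) ∈ simplexInt := ⟨h0, h0, by simp only; linarith⟩
  have hev := isOpen_simplexInt.mem_nhds hx
  have E0 : (fun y => fderiv ℝ (potFpi β r) y (eBasis 0)) =ᶠ[nhds (t, t)]
      fun y => partialF β r y.1 y.2 := by
    filter_upwards [hev] with y hy
    rw [(hasFDerivAt_potFpi β r hy).fderiv]
    simp [eBasis]
  have E1 : (fun y => fderiv ℝ (potFpi β r) y (eBasis 1)) =ᶠ[nhds (t, t)]
      fun y => partialF β r y.2 y.1 := by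
    filter_upwards [hev] with y hy
    rw [(hasFDerivAt_potFpi β r hy).fderiv]
    simp [eBasis]
  rw [Matrix.det_fin_two]
  simp only [hessian, Matrix.of_apply]
  rw [E0.fderiv_eq, E1.fderiv_eq, (hasFDerivAt_partialF β r hx).fderiv,
    (hasFDerivAt_partialF_swap β r hx).fderiv]
  have e : 1 / (t * (1 - 2 * t)) = 1 / t + 2 * (1 / (1 - 2 * t)) := by
    exact div_split h0.ne' hu.ne'
  rw [e]
  simp [eBasis]
  rw [show 1 - t - t = 1 - 2 * t by ring]
  ring

/-- for `β > 2` and external field of angle `θ_e = π` and magnitude `r`: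
(i) if `0 < r < 1` and `t ∈ (0,m₀(r))` satisfies `f_r(t) = β`, then `(t,t)` is a local
minimum of `F_β(·,r)`; (ii) if `r > 0` and `t ∈ (1/3,1/2)` satisfies `f_r(t) = β`, then
`(t,t)` is a critical point of `F_β(·,r)` whose Hessian has strictly negative
determinant, i.e. a saddle point. -/
theorem potts_external_field_pi_critical_points (β : ℝ) (hβ : 2 < β) :
    (∀ r : ℝ, 0 < r → r < 1 → ∀ m0 ∈ Set.Ioo (0 : ℝ) (1 / 2), hfun m0 = r →
      ∀ t ∈ Set.Ioo 0 m0, frfun r t = β → IsLocalMin (potFpi β r) (t, t)) ∧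
    (∀ r : ℝ, 0 < r → ∀ t ∈ Set.Ioo (1 / 3 : ℝ) (1 / 2), frfun r t = β →
      fderiv ℝ (potFpi β r) (t, t) = 0 ∧ (hessian (potFpi β r) (t, t)).det < 0) := by
  refine ⟨?_, ?_⟩
  · intro r hr0 hr1 m0 hm0 hm t ht hf
    obtain ⟨hne, hL⟩ := critical_eq hβ hf
    have hm4 : m0 < 1 / 4 := by
      by_contra hcon
      have := hfun_nonpos (not_lt.1 hcon) hm0.2
      linarith
    have ht3 : t < 1 / 3 := by linarith [ht.2]
    have hh : r < hfun t := hm ▸ hfun_lt_of_lt ht.1 ht.2 hm4.le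
    have hLpos := log_ratio_pos ht.1 ht3
    refine isLocalMin_diag hβ ht.1 ht3 hL ?_
    rw [hL] at hLpos
    have hg : 0 < 1 - r - 3 * t := by
      by_contra hcon
      nlinarith
    rw [hfun, hL] at hh
    -- `h(t) > r` reads `(1 - r - 3t) (1 - (9/2) β t (1 - 2t)) > 0`
    have : 0 < (1 - r - 3 * t) * (1 - 9 / 2 * β * (t * (1 - 2 * t))) := by nlinarith
    linarith [(mul_pos_iff_of_pos_left hg).1 this]
  · intro r hr t ht hf
    obtain ⟨hne, hL⟩ := critical_eq hβ hf
    have h0 : 0 < t := by linarith [ht.1]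
    have hu : 0 < 1 - 2 * t := by linarith [ht.2]
    have hβ0 : 0 < β := by linarith
    constructor
    · rw [(hasFDerivAt_potFpi β r (x := (t, t)) ⟨h0, h0, by simp only; linarith⟩).fderiv]
      have : partialF β r t t = 0 := by
        rw [Real.log_div hu.ne' h0.ne'] at hL
        rw [partialF, show 1 - t - t = 1 - 2 * t by ring, Real.log_mul (by norm_num) h0.ne',
          Real.log_mul (by norm_num) hu.ne']
        field_simp
        linarith
      simp [this]
    · rw [hessian_det β r h0 ht.2]
      have hg : 1 - r - 3 * t < 0 := by linarith [ht.1]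
      have hh := hfun_nonpos (by linarith [ht.1]) ht.2
      rw [hfun, hL] at hh
      apply mul_neg_of_pos_of_neg
      · have : (1 - r - 3 * t) * (1 - 9 / 2 * β * (t * (1 - 2 * t))) < 0 := by nlinarith
        have h2 := pos_of_mul_neg_right this hg.le
        rw [sub_pos, one_div_mul_one_div, lt_div_iff₀ (by positivity)]
        linarith
      · have : 2 / 3 < β * t := by nlinarith [ht.1]
        rw [sub_neg, one_div_mul_one_div, div_lt_iff₀ (by positivity)]
        linarith
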